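/- There exists a 2-(24,4,1) packing with 42 blocks whose leave is a vertex-disjoint union of one cycle of length 3 and one cycle of length 21, covering all 24 points (leave type 3^1 21^1). -/

import Mathlib

/-- A 2-(24,4,1) packing: a collection of 4-element blocks on 24 points such that
every pair of distinct points lies in at most one block. -/
def IsPacking (B : Finset (Finset (Fin 24))) : Prop :=
  (∀ b ∈ B, b.card = 4) ∧
  ∀ p q : Fin 24, p ≠ q → ∀ b₁ ∈ B, ∀ b₂ ∈ B,
    p ∈ b₁ → q ∈ b₁ → p ∈ b₂ → q ∈ b₂ → b₁ = b₂

/-- Adjacency in the leave of a packing: the pair of distinct points is covered by no block. -/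
def LeaveAdj (B : Finset (Finset (Fin 24))) (p q : Fin 24) : Prop :=
  p ≠ q ∧ ∀ b ∈ B, ¬ (p ∈ b ∧ q ∈ b)

/-- The leave of the packing `B` is a vertex-disjoint union of cycles whose lengths are
given by the list `L`, covering all 24 points. -/
def LeaveIsCycleType (B : Finset (Finset (Fin 24))) (L : List ℕ) : Prop :=
  ∃ f : (i : Fin L.length) → ZMod (L.get i) → Fin 24,
    Function.Bijective (fun x : Σ i : Fin L.length, ZMod (L.get i) => f x.1 x.2) ∧
    ∀ p q : Fin 24, LeaveAdj B p q ↔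
      ∃ i k, (p = f i k ∧ q = f i (k + 1)) ∨ (q = f i k ∧ p = f i (k + 1))

/-!
Bose's method of pure and mixed differences. The points are three points at infinity, labelled by
`ZMod 3`, together with `ZMod 21`, which acts by translation on itself and through reduction mod 3
on the points at infinity. The blocks are the translates under this action of two base blocks,
`{0, 3, 9, 13}` and `{∞₀, 0, 2, 7}`.

A pair of finite points is covered once for each way of writing its difference as a difference
inside a base block. The differences of `{0, 3, 9, 13}` are `±3, ±4, ±6, ±8, ±9, ±10` and those of
`{0, 2, 7}` are `±2, ±5, ±7`, so every nonzero difference occurs once, except `±1`, which never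
occurs: the uncovered pairs `{x, x + 1}` form a 21-cycle. Since `0, 2, 7` represent the residues
mod 3, every pair of a finite and an infinite point is covered once. Pairs of points at infinity are
never covered and form a triangle.
-/

open Finset
open scoped Pointwise

section Transport

variable {κ X : Type*}

/-- A family of blocks is linear if two distinct points lie together in at most one member. -/
def IsLinearFamily (b : κ → Finset X) : Prop :=
  ∀ ⦃p q⦄, p ≠ q → ∀ ⦃x y⦄, p ∈ b x → q ∈ b x → p ∈ b y → q ∈ b y → x = y

lemma IsLinearFamily.injective {b : κ → Finset X} (hb : IsLinearFamily b)
    (hcard : ∀ x, 1 < (b x).card) : Function.Injective b := fun x y hxy => by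
  obtain ⟨p, hp, q, hq, hpq⟩ := one_lt_card.mp (hcard x)
  exact hb hpq hp hq (hxy ▸ hp) (hxy ▸ hq)

variable [Fintype κ]

/-- The blocks of a family on an abstract point set `X`, as blocks on the points `Fin 24` of a
packing via the numbering `e`. -/
def transportedBlocks (e : X ≃ Fin 24) (b : κ → Finset X) : Finset (Finset (Fin 24)) :=
  univ.image fun x => (b x).map e.toEmbedding

lemma card_transportedBlocks (e : X ≃ Fin 24) {b : κ → Finset X} (hb : Function.Injective b) :
    (transportedBlocks e b).card = Fintype.card κ :=
  card_image_of_injective _ ((map_injective _).comp hb)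

lemma IsLinearFamily.isPacking_transportedBlocks (e : X ≃ Fin 24) {b : κ → Finset X}
    (hb : IsLinearFamily b) (hcard : ∀ x, (b x).card = 4) : IsPacking (transportedBlocks e b) := by
  simp only [IsPacking, transportedBlocks, mem_image, mem_univ, true_and, forall_exists_index,
    forall_apply_eq_imp_iff, card_map, mem_map_equiv]
  refine ⟨hcard, fun p q hpq x y hpx hqx hpy hqy => ?_⟩
  rw [hb (e.symm.injective.ne hpq) hpx hqx hpy hqy]

lemma leaveAdj_transportedBlocks (e : X ≃ Fin 24) (b : κ → Finset X) (p q : X) :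
    LeaveAdj (transportedBlocks e b) (e p) (e q) ↔ p ≠ q ∧ ¬ ∃ x, p ∈ b x ∧ q ∈ b x := by
  simp only [LeaveAdj, transportedBlocks, mem_image, mem_univ, true_and, forall_exists_index,
    forall_apply_eq_imp_iff, mem_map_equiv, e.symm_apply_apply, e.injective.ne_iff, not_exists]

end Transport

section Cycles

/-- Adjacency in the cycle `0, 1, 2, …` through the elements of `ZMod n`. -/
def CyclicAdj {n : ℕ} (x y : ZMod n) : Prop :=
  y = x + 1 ∨ x = y + 1

lemma cyclicAdj_iff_sub_mem {n : ℕ} {x y : ZMod n} :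
    CyclicAdj x y ↔ x - y ∈ ({1, -1} : Finset (ZMod n)) := by
  rw [mem_insert, mem_singleton, sub_eq_iff_eq_add', ← neg_sub y x, neg_inj, sub_eq_iff_eq_add',
    or_comm, CyclicAdj]

lemma CyclicAdj.ne {n : ℕ} [Nontrivial (ZMod n)] {x y : ZMod n} (h : CyclicAdj x y) : x ≠ y := by
  rintro rfl
  exact left_ne_add.mpr one_ne_zero (or_self_iff.mp h)

/-- The inclusions of `ZMod m` and `ZMod n` into their disjoint union, indexed by the positions of
the list `[m, n]`. -/
def pairInclusion (m n : ℕ) : (i : Fin [m, n].length) → ZMod ([m, n].get i) → ZMod m ⊕ ZMod n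
  | 0 => .inl
  | 1 => .inr

lemma pairInclusion_bijective (m n : ℕ) :
    Function.Bijective fun x : Σ i, ZMod ([m, n].get i) => pairInclusion m n x.1 x.2 := by
  refine ⟨?_, fun
    | .inl x => ⟨⟨0, x⟩, rfl⟩
    | .inr x => ⟨⟨1, x⟩, rfl⟩⟩
  rintro ⟨i, x⟩ ⟨j, y⟩ hxy
  fin_cases i <;> fin_cases j
  · exact congrArg _ (Sum.inl_injective hxy)
  · exact absurd hxy Sum.inl_ne_inr
  · exact absurd hxy Sum.inr_ne_inl
  · exact congrArg _ (Sum.inr_injective hxy)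

lemma liftRel_cyclicAdj_iff {m n : ℕ} {p q : ZMod m ⊕ ZMod n} :
    Sum.LiftRel CyclicAdj CyclicAdj p q ↔
      ∃ i k, (p = pairInclusion m n i k ∧ q = pairInclusion m n i (k + 1)) ∨
        (q = pairInclusion m n i k ∧ p = pairInclusion m n i (k + 1)) := by
  constructor
  · rintro (⟨rfl | rfl⟩ | ⟨rfl | rfl⟩)
    · exact ⟨0, _, .inl ⟨rfl, rfl⟩⟩
    · exact ⟨0, _, .inr ⟨rfl, rfl⟩⟩
    · exact ⟨1, _, .inl ⟨rfl, rfl⟩⟩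
    · exact ⟨1, _, .inr ⟨rfl, rfl⟩⟩
  · rintro ⟨i, k, ⟨rfl, rfl⟩ | ⟨rfl, rfl⟩⟩ <;> fin_cases i
    · exact .inl (.inl rfl)
    · exact .inr (.inl rfl)
    · exact .inl (.inr rfl)
    · exact .inr (.inr rfl)

lemma leaveIsCycleType_pair {B : Finset (Finset (Fin 24))} {m n : ℕ}
    (e : ZMod m ⊕ ZMod n ≃ Fin 24)
    (h : ∀ p q, LeaveAdj B (e p) (e q) ↔ Sum.LiftRel CyclicAdj CyclicAdj p q) :
    LeaveIsCycleType B [m, n] := by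
  refine ⟨fun i k => e (pairInclusion m n i k), e.bijective.comp (pairInclusion_bijective m n),
    fun p q => ?_⟩
  simp only [← e.symm_apply_eq, ← liftRel_cyclicAdj_iff, ← h, e.apply_symm_apply]

end Cycles

section Development

variable {ι G H : Type*} [AddCommGroup G] [AddCommGroup H] [DecidableEq G] [DecidableEq H]
  (φ : G →+ H) (D : ι → Finset G) (I : ι → Finset H)

/-- The translate by `x.2` of the base block with infinite part `I x.1` and finite part `D x.1`,
where `G` acts on the points at infinity `H` through `φ`. -/
def developedBlock (x : ι × G) : Finset (H ⊕ G) :=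
  (φ x.2 +ᵥ I x.1).disjSum (x.2 +ᵥ D x.1)

/-- The base blocks with finite parts `D` and infinite parts `I` form a difference packing if no
difference of two finite points (a pure difference) and no difference of a finite and an infinite
point (a mixed difference) is repeated, and no base block has two points at infinity. -/
structure IsDifferencePacking : Prop where
  pure_unique : ∀ i j, ∀ a ∈ D i, ∀ b ∈ D i, ∀ c ∈ D j, ∀ d ∈ D j,
    a ≠ b → a - b = c - d → i = j ∧ a = c
  mixed_unique : ∀ i j, ∀ a ∈ D i, ∀ h ∈ I i, ∀ c ∈ D j, ∀ k ∈ I j,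
    φ a - h = φ c - k → i = j ∧ a = c
  card_infinite_le_one : ∀ i, (I i).card ≤ 1

/-- The differences of two finite points in a common base block, including `0`. -/
def pureDifferences [Fintype ι] : Finset G :=
  univ.biUnion fun i => D i - D i

/-- The differences of a finite and an infinite point in a common base block. -/
def mixedDifferences [Fintype ι] : Finset H :=
  univ.biUnion fun i => (D i).image φ - I i

variable {φ D I}

lemma card_developedBlock (x : ι × G) :
    (developedBlock φ D I x).card = (I x.1).card + (D x.1).card := by
  simp only [developedBlock, card_disjSum, card_vadd_finset]

lemma inl_mem_developedBlock {h : H} {x : ι × G} :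
    .inl h ∈ developedBlock φ D I x ↔ h - φ x.2 ∈ I x.1 := by
  rw [developedBlock, inl_mem_disjSum, ← neg_vadd_mem_iff, vadd_eq_add, neg_add_eq_sub]

lemma inr_mem_developedBlock {a : G} {x : ι × G} :
    .inr a ∈ developedBlock φ D I x ↔ a - x.2 ∈ D x.1 := by
  rw [developedBlock, inr_mem_disjSum, ← neg_vadd_mem_iff, vadd_eq_add, neg_add_eq_sub]

lemma eq_of_inl_mem_developedBlock (hI : ∀ i, (I i).card ≤ 1) {h k : H} {x : ι × G}
    (hh : .inl h ∈ developedBlock φ D I x) (hk : .inl k ∈ developedBlock φ D I x) : h = k := by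
  rw [inl_mem_developedBlock] at hh hk
  exact sub_left_injective (card_le_one.mp (hI x.1) _ hh _ hk)

namespace IsDifferencePacking

lemma eq_of_inr_mem (hS : IsDifferencePacking φ D I) {a b : G} (hab : a ≠ b) {x y : ι × G}
    (hax : .inr a ∈ developedBlock φ D I x) (hbx : .inr b ∈ developedBlock φ D I x)
    (hay : .inr a ∈ developedBlock φ D I y) (hby : .inr b ∈ developedBlock φ D I y) : x = y := by
  rw [inr_mem_developedBlock] at hax hbx hay hby
  obtain ⟨hi, hg⟩ := hS.pure_unique _ _ _ hax _ hbx _ hay _ hby (sub_left_injective.ne hab)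
    (by simp only [sub_sub_sub_cancel_right])
  exact Prod.ext hi (sub_right_injective hg)

lemma eq_of_inl_inr_mem (hS : IsDifferencePacking φ D I) {h : H} {a : G} {x y : ι × G}
    (hhx : .inl h ∈ developedBlock φ D I x) (hax : .inr a ∈ developedBlock φ D I x)
    (hhy : .inl h ∈ developedBlock φ D I y) (hay : .inr a ∈ developedBlock φ D I y) : x = y := by
  rw [inl_mem_developedBlock] at hhx hhy
  rw [inr_mem_developedBlock] at hax hay
  obtain ⟨hi, hg⟩ := hS.mixed_unique _ _ _ hax _ hhx _ hay _ hhy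
    (by simp only [map_sub, sub_sub_sub_cancel_right])
  exact Prod.ext hi (sub_right_injective hg)

theorem isLinearFamily_developedBlock (hS : IsDifferencePacking φ D I) :
    IsLinearFamily (developedBlock φ D I) := by
  rintro (h | a) (k | b) hne x y hpx hqx hpy hqy
  · exact absurd (congrArg _ (eq_of_inl_mem_developedBlock hS.card_infinite_le_one hpx hqx)) hne
  · exact hS.eq_of_inl_inr_mem hpx hqx hpy hqy
  · exact hS.eq_of_inl_inr_mem hqx hpx hqy hpy
  · exact hS.eq_of_inr_mem (ne_of_apply_ne _ hne) hpx hqx hpy hqy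

end IsDifferencePacking

variable [Fintype ι]

lemma exists_inr_mem_developedBlock_iff {a b : G} :
    (∃ x, .inr a ∈ developedBlock φ D I x ∧ .inr b ∈ developedBlock φ D I x) ↔
      a - b ∈ pureDifferences D := by
  simp only [inr_mem_developedBlock, pureDifferences, mem_biUnion, mem_univ, true_and, mem_sub]
  constructor
  · rintro ⟨⟨i, g⟩, ha, hb⟩
    exact ⟨i, _, ha, _, hb, sub_sub_sub_cancel_right a b g⟩
  · rintro ⟨i, c, hc, d, hd, hcd⟩
    refine ⟨(i, a - c), ?_, ?_⟩
    · rwa [sub_sub_cancel]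
    · rwa [show b - (a - c) = c - (a - b) by abel, ← hcd, sub_sub_cancel]

lemma exists_inl_inr_mem_developedBlock_iff {h : H} {a : G} :
    (∃ x, .inl h ∈ developedBlock φ D I x ∧ .inr a ∈ developedBlock φ D I x) ↔
      φ a - h ∈ mixedDifferences φ D I := by
  simp only [inl_mem_developedBlock, inr_mem_developedBlock, mixedDifferences, mem_biUnion,
    mem_univ, true_and, mem_sub, exists_mem_image]
  constructor
  · rintro ⟨⟨i, g⟩, hh, ha⟩
    exact ⟨i, _, ha, _, hh, by rw [map_sub, sub_sub_sub_cancel_right]⟩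
  · rintro ⟨i, c, hc, k, hk, hck⟩
    refine ⟨(i, a - c), ?_, ?_⟩
    · rwa [map_sub, show h - (φ a - φ c) = φ c - (φ a - h) by abel, ← hck, sub_sub_cancel]
    · rwa [sub_sub_cancel]

theorem uncovered_developedBlock_iff (hI : ∀ i, (I i).card ≤ 1)
    (hmixed : ∀ d, d ∈ mixedDifferences φ D I) (p q : H ⊕ G) :
    (p ≠ q ∧ ¬ ∃ x, p ∈ developedBlock φ D I x ∧ q ∈ developedBlock φ D I x) ↔
      Sum.LiftRel (· ≠ ·) (fun a b => a ≠ b ∧ a - b ∉ pureDifferences D) p q := by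
  rcases p with h | a <;> rcases q with k | b
  · rw [Sum.liftRel_inl_inl, Sum.inl_injective.ne_iff, and_iff_left_iff_imp]
    rintro hne ⟨x, hh, hk⟩
    exact hne (eq_of_inl_mem_developedBlock hI hh hk)
  · simp only [exists_inl_inr_mem_developedBlock_iff, hmixed, not_true, and_false,
      Sum.not_liftRel_inl_inr]
  · simp only [and_comm (a := Sum.inr a ∈ _), exists_inl_inr_mem_developedBlock_iff, hmixed,
      not_true, and_false, Sum.not_liftRel_inr_inl]
  · rw [Sum.liftRel_inr_inr, Sum.inr_injective.ne_iff, exists_inr_mem_developedBlock_iff]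

end Development

section BaseBlocks

/-- The finite parts of the base blocks `{0, 3, 9, 13}` and `{∞₀, 0, 2, 7}`. -/
def baseFinite : Fin 2 → Finset (ZMod 21) :=
  ![{0, 3, 9, 13}, {0, 2, 7}]

/-- The infinite parts of the base blocks `{0, 3, 9, 13}` and `{∞₀, 0, 2, 7}`. -/
def baseInfinite : Fin 2 → Finset (ZMod 3) :=
  ![∅, {0}]

/-- Reduction mod 3, through which `ZMod 21` acts on the three points at infinity. -/
def reduceModThree : ZMod 21 →+ ZMod 3 :=
  (ZMod.castHom (by decide) (ZMod 3)).toAddMonoidHom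

lemma isDifferencePacking_base :
    IsDifferencePacking reduceModThree baseFinite baseInfinite where
  pure_unique := by decide
  mixed_unique := by decide
  card_infinite_le_one := by decide

lemma pureDifferences_base : pureDifferences baseFinite = {1, -1}ᶜ := by decide

lemma mixedDifferences_base :
    ∀ d, d ∈ mixedDifferences reduceModThree baseFinite baseInfinite := by decide

lemma card_base (i : Fin 2) : (baseInfinite i).card + (baseFinite i).card = 4 := by
  revert i; decide

/-- The 42 blocks on the points at infinity `ZMod 3` and the finite points `ZMod 21`. -/
def baseDevelopment : Fin 2 × ZMod 21 → Finset (ZMod 3 ⊕ ZMod 21) :=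
  developedBlock reduceModThree baseFinite baseInfinite

lemma card_baseDevelopment (x : Fin 2 × ZMod 21) : (baseDevelopment x).card = 4 :=
  (card_developedBlock x).trans (card_base x.1)

lemma ne_iff_cyclicAdj_zmod_three : ∀ h k : ZMod 3, h ≠ k ↔ CyclicAdj h k := by
  unfold CyclicAdj
  decide

lemma ne_and_sub_notMem_pureDifferences_iff (a b : ZMod 21) :
    a ≠ b ∧ a - b ∉ pureDifferences baseFinite ↔ CyclicAdj a b := by
  have : Nontrivial (ZMod 21) := ZMod.nontrivial_iff.mpr (by decide)
  rw [pureDifferences_base, mem_compl, not_not, ← cyclicAdj_iff_sub_mem,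
    and_iff_right_of_imp CyclicAdj.ne]

lemma uncovered_baseDevelopment_iff (p q : ZMod 3 ⊕ ZMod 21) :
    (p ≠ q ∧ ¬ ∃ x, p ∈ baseDevelopment x ∧ q ∈ baseDevelopment x) ↔
      Sum.LiftRel CyclicAdj CyclicAdj p q := by
  refine (uncovered_developedBlock_iff isDifferencePacking_base.card_infinite_le_one
    mixedDifferences_base p q).trans ?_
  simp only [ne_iff_cyclicAdj_zmod_three, ne_and_sub_notMem_pureDifferences_iff]

end BaseBlocks

/-- There is a 2-(24,4,1) packing with 42 blocks whose leave is a vertex-disjoint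
union of cycles of lengths [3, 21], covering all 24 points. -/
theorem exists_max_packing_with_leave_type :
    ∃ B : Finset (Finset (Fin 24)), IsPacking B ∧ B.card = 42 ∧
      LeaveIsCycleType B [3, 21] := by
  have hlinear : IsLinearFamily baseDevelopment :=
    isDifferencePacking_base.isLinearFamily_developedBlock
  have hinjective : Function.Injective baseDevelopment :=
    hlinear.injective fun x => by rw [card_baseDevelopment]; decide
  let e : ZMod 3 ⊕ ZMod 21 ≃ Fin 24 := finSumFinEquiv
  refine ⟨transportedBlocks e baseDevelopment,
    hlinear.isPacking_transportedBlocks e card_baseDevelopment, ?_,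
    leaveIsCycleType_pair e fun p q => ?_⟩
  · rw [card_transportedBlocks e hinjective, Fintype.card_prod, Fintype.card_fin, ZMod.card]
  · rw [leaveAdj_transportedBlocks, uncovered_baseDevelopment_iff]
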